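/- Let F be the multivalued map of [0,1] (with the usual metric) into itself defined by F(x) = {2x/3} for 0 ≤ x < 3/4, F(x) = {1/2} for 3/4 ≤ x < 1, and F(1) = {1/3, 3/4}. Then for no constant a > 1 and no function β : [0,∞) → [0,1) is F an (a, β)-contraction, where a denotes the constant function α(t) = a. -/

import Mathlib

/-!
The single-valued part of `F` shrinks the distances to the image only by the factor `2 / 3`, so
`β ≥ 2 / 3` and hence `α < 3 / 2` on `(0, 1 / 4)`. At `x = 1` the nearer value `3 / 4` cannot be
selected, because it is as far from `1 / 2`, its own image, as from `1`. Selecting `1 / 3` instead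
forces `α (2 / 3) ≥ 8 / 3`, so `α` cannot be nonincreasing.
-/

open Metric Set

section PseudoMetricSpace

variable {X : Type*} [PseudoMetricSpace X]

/-- `F` is an `(α, β)`-mapping on the set `s`: every `x ∈ s` has an almost nearest point `y ∈ F x`
whose distance to `F y` is controlled by `dist x y`. The ranges `[1, ∞)` of `α` and `[0, 1)` of `β`
are not part of the definition. -/
def IsAlphaBetaMappingOn (α β : ℝ → ℝ) (F : X → Set X) (s : Set X) : Prop :=
  ∀ x ∈ s, ∃ y ∈ F x,
    dist x y ≤ α (dist x y) * infDist x (F x) ∧ infDist y (F y) ≤ β (dist x y) * dist x y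

/-- An `(α, β)`-contraction on `s` is an `(α, β)`-mapping on `s` with `α t * β t < 1` for `t > 0`;
the ranges of `α` and `β` are again left to hypotheses. -/
def IsAlphaBetaContractionOn (α β : ℝ → ℝ) (F : X → Set X) (s : Set X) : Prop :=
  IsAlphaBetaMappingOn α β F s ∧ ∀ t > 0, α t * β t < 1

variable {α β : ℝ → ℝ} {F : X → Set X} {s : Set X} {x y z : X}

lemma IsAlphaBetaMappingOn.dist_le_mul_dist_of_eq_singleton (hF : IsAlphaBetaMappingOn α β F s)
    (hx : x ∈ s) (hFx : F x = {y}) (hFy : F y = {z}) :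
    dist y z ≤ β (dist x y) * dist x y := by
  obtain ⟨y', hy', -, hβ⟩ := hF x hx
  obtain rfl : y' = y := by rwa [hFx] at hy'
  rwa [hFy, infDist_singleton] at hβ

lemma IsAlphaBetaContractionOn.mul_dist_lt_dist_of_eq_singleton
    (hF : IsAlphaBetaContractionOn α β F s) (hx : x ∈ s) (hFx : F x = {y}) (hFy : F y = {z})
    (hxy : 0 < dist x y) :
    α (dist x y) * dist y z < dist x y := by
  rcases le_total 0 (α (dist x y)) with hα | hα
  · calc
      α (dist x y) * dist y z ≤ α (dist x y) * (β (dist x y) * dist x y) := by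
        gcongr
        exact hF.1.dist_le_mul_dist_of_eq_singleton hx hFx hFy
      _ = α (dist x y) * β (dist x y) * dist x y := (mul_assoc ..).symm
      _ < dist x y := mul_lt_of_lt_one_left hxy (hF.2 _ hxy)
  · exact (mul_nonpos_of_nonpos_of_nonneg hα dist_nonneg).trans_lt hxy

lemma IsAlphaBetaMappingOn.dist_le_mul_dist_of_eq_pair (hF : IsAlphaBetaMappingOn α β F s)
    (hx : x ∈ s) (hFx : F x = {y, z}) (hxy : 0 < dist x y) (hxz : 0 < dist x z)
    (hz : dist x z ≤ infDist z (F z)) (hβ : β (dist x z) < 1) :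
    dist x y ≤ α (dist x y) * dist x z := by
  obtain ⟨w, hw, hα, hwβ⟩ := hF x hx
  have hwz : w ≠ z := by
    rintro rfl
    exact (hz.trans hwβ).not_gt (mul_lt_of_lt_one_left hxz hβ)
  rw [hFx] at hw
  obtain rfl : w = y := hw.resolve_right hwz
  have hα_pos : 0 < α (dist x w) :=
    pos_of_mul_pos_left (hxy.trans_le hα) infDist_nonneg
  have hz_mem : z ∈ F x := by simp [hFx]
  exact hα.trans (mul_le_mul_of_nonneg_left (infDist_le_dist_of_mem hz_mem) hα_pos.le)

end PseudoMetricSpace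

section UnitInterval

variable {α β : ℝ → ℝ} {F : ℝ → Set ℝ}

lemma IsAlphaBetaContractionOn.alpha_lt_three_halves
    (hF : IsAlphaBetaContractionOn α β F (Icc 0 1))
    (hF₁ : ∀ x : ℝ, 0 ≤ x → x < 3 / 4 → F x = {2 * x / 3}) {t : ℝ} (ht₀ : 0 < t)
    (ht : t < 1 / 4) :
    α t < 3 / 2 := by
  have hF_three : F (3 * t) = {2 * t} := by
    rw [hF₁ (3 * t) (by linarith) (by linarith)]
    ring_nf
  have hF_two : F (2 * t) = {4 * t / 3} := by
    rw [hF₁ (2 * t) (by linarith) (by linarith)]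
    ring_nf
  have hdist : dist (3 * t) (2 * t) = t := by
    rw [Real.dist_eq, abs_of_pos] <;> linarith
  have hdist' : dist (2 * t) (4 * t / 3) = 2 / 3 * t := by
    rw [Real.dist_eq, abs_of_pos] <;> linarith
  have hlt := hF.mul_dist_lt_dist_of_eq_singleton ⟨by linarith, by linarith⟩ hF_three hF_two
    (by rwa [hdist])
  rw [hdist, hdist', ← mul_assoc, mul_lt_iff_lt_one_left ht₀] at hlt
  linarith

lemma IsAlphaBetaMappingOn.eight_thirds_le_alpha (hF : IsAlphaBetaMappingOn α β F (Icc 0 1))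
    (hF₂ : F (3 / 4) = {1 / 2}) (hF₃ : F 1 = {1 / 3, 3 / 4}) (hβ : β (1 / 4) < 1) :
    8 / 3 ≤ α (2 / 3) := by
  have hdist_third : dist (1 : ℝ) (1 / 3) = 2 / 3 := by norm_num [Real.dist_eq]
  have hdist_three_fourths : dist (1 : ℝ) (3 / 4) = 1 / 4 := by norm_num [Real.dist_eq]
  have hinfDist : infDist (3 / 4) (F (3 / 4)) = 1 / 4 := by
    rw [hF₂, infDist_singleton]
    norm_num [Real.dist_eq]
  have hle := hF.dist_le_mul_dist_of_eq_pair (right_mem_Icc.2 zero_le_one) hF₃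
    (by norm_num [hdist_third]) (by norm_num [hdist_three_fourths])
    (by rw [hinfDist, hdist_three_fourths]) (by rwa [hdist_three_fourths])
  rw [hdist_third, hdist_three_fourths] at hle
  linarith

theorem example_not_constant_alpha_contraction_general
    (hF₁ : ∀ x : ℝ, 0 ≤ x → x < 3 / 4 → F x = {2 * x / 3})
    (hF₂ : F (3 / 4) = {1 / 2}) (hF₃ : F 1 = {1 / 3, 3 / 4})
    (hα : AntitoneOn α (Ioi 0)) (hβ : ∀ t > 0, β t < 1) :
    ¬ IsAlphaBetaContractionOn α β F (Icc 0 1) := by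
  intro hF
  have hlower : 8 / 3 ≤ α (2 / 3) :=
    hF.1.eight_thirds_le_alpha hF₂ hF₃ (hβ _ (by norm_num))
  have hupper : α (1 / 8) < 3 / 2 :=
    hF.alpha_lt_three_halves hF₁ (by norm_num) (by norm_num)
  have hmono : α (2 / 3) ≤ α (1 / 8) :=
    hα (mem_Ioi.2 (by norm_num)) (mem_Ioi.2 (by norm_num)) (by norm_num)
  linarith

end UnitInterval

/-- **Example 1.7 (2).** The finite-valued mapping `F` of `[0,1]` into itself with
`F x = {2x/3}` for `0 ≤ x < 3/4`, `F x = {1/2}` for `3/4 ≤ x < 1` and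
`F 1 = {1/3, 3/4}` is not an `(a, β)`-contraction for any constant `a > 1` and any
`β : [0,∞) → [0,1)`. -/
theorem example_not_constant_alpha_contraction
    (F : ℝ → Set ℝ)
    (hF₁ : ∀ x : ℝ, 0 ≤ x → x < 3 / 4 → F x = {2 * x / 3})
    (hF₂ : ∀ x : ℝ, 3 / 4 ≤ x → x < 1 → F x = {1 / 2})
    (hF₃ : F 1 = {1 / 3, 3 / 4}) :
    ∀ a : ℝ, 1 < a →
    ∀ β : ℝ → ℝ, (∀ t, 0 ≤ t → β t ∈ Set.Ico (0 : ℝ) 1) →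
      ¬ ((∀ x ∈ Set.Icc (0 : ℝ) 1, ∃ y ∈ F x,
            dist x y ≤ a * Metric.infDist x (F x) ∧
            Metric.infDist y (F y) ≤ β (dist x y) * dist x y) ∧
          ∀ t > (0 : ℝ), a * β t < 1) := by
  intro a _ β hβ
  exact example_not_constant_alpha_contraction_general (α := fun _ ↦ a) hF₁
    (hF₂ _ le_rfl (by norm_num)) hF₃ antitoneOn_const fun t ht ↦ (hβ t ht.le).2
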